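/- arXiv:2410.21463 — 6 statements merged into one kernel-verified Lean document; each statement's English description precedes it below -/
import Mathlib

section
/- Let f : ℝ → ℝ be a homeomorphism of ℝ (a continuous bijection with continuous inverse) such that f(x) = x for all x outside the interval [1/2, 2]. Then the map F : ℝ × ℝ → ℝ × ℝ defined by F(x,y) = (x, x·f(y/x)) for x ≠ 0 and F(0,y) = (0,y) is a homeomorphism of the plane; moreover its inverse is the map G defined by G(x,y) = (x, x·f⁻¹(y/x)) for x ≠ 0 and G(0,y) = (0,y), where f⁻¹ is the inverse of f. -/
/-- The map `F(x,y) = (x, x·f(y/x))` for `x ≠ 0`, `F(0,y) = (0,y)`. -/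
noncomputable def Fmap (f : ℝ → ℝ) : ℝ × ℝ → ℝ × ℝ :=
  fun p => if p.1 = 0 then p else (p.1, p.1 * f (p.2 / p.1))

/-! Writing `x * f (y / x) = y + x * (f (y / x) - y / x)` shows that a bounded displacement
`f t - t` makes `F` continuous on the line `x = 0`. Since `f ↦ F` preserves composition and the
inverse of `f` has the same bound on its displacement, `F` is a homeomorphism. -/

open Function Filter Topology

theorem continuous_mul_of_norm_le {X R : Type*} [TopologicalSpace X] [NonUnitalSeminormedRing R]
    {a b : X → R} {C : ℝ} (ha : Continuous a) (hb : ∀ x, a x ≠ 0 → ContinuousAt b x)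
    (hC : ∀ x, ‖b x‖ ≤ C) : Continuous fun x => a x * b x := by
  refine continuous_iff_continuousAt.2 fun x => ?_
  by_cases hx : a x = 0
  · have ha₀ : Tendsto a (𝓝 x) (𝓝 0) := hx ▸ ha.tendsto x
    simpa only [ContinuousAt, hx, zero_mul] using
      ha₀.zero_mul_isBoundedUnder_le (isBoundedUnder_of ⟨C, hC⟩)
  · exact ha.continuousAt.mul (hb x hx)

theorem exists_norm_sub_self_le_of_eq_self_off_isCompact {E : Type*} [SeminormedAddCommGroup E]
    {f : E → E} {K : Set E} (hf : Continuous f) (hK : IsCompact K) (hid : ∀ x ∉ K, f x = x) :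
    ∃ C, ∀ x, ‖f x - x‖ ≤ C := by
  have hsupp : HasCompactSupport fun x => f x - x :=
    HasCompactSupport.intro hK fun x hx => sub_eq_zero.2 (hid x hx)
  exact hsupp.exists_bound_of_continuous (hf.sub continuous_id)

theorem norm_sub_self_le_of_rightInverse {E : Type*} [SeminormedAddCommGroup E] {f g : E → E}
    {C : ℝ} (hfg : RightInverse g f) (hC : ∀ x, ‖f x - x‖ ≤ C) (y : E) : ‖g y - y‖ ≤ C := by
  simpa only [hfg y, norm_sub_rev y] using hC (g y)

theorem Fmap_eq_add_mul_sub (f : ℝ → ℝ) (p : ℝ × ℝ) :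
    Fmap f p = (p.1, p.2 + p.1 * (f (p.2 / p.1) - p.2 / p.1)) := by
  obtain ⟨x, y⟩ := p
  by_cases hx : x = 0 <;> simp [Fmap, hx, mul_sub, mul_div_cancel₀]

theorem continuous_Fmap {f : ℝ → ℝ} {C : ℝ} (hf : Continuous f) (hC : ∀ t, ‖f t - t‖ ≤ C) :
    Continuous (Fmap f) := by
  have hdisp : Continuous fun p : ℝ × ℝ => p.1 * (f (p.2 / p.1) - p.2 / p.1) := by
    refine continuous_mul_of_norm_le continuous_fst (fun p hp => ?_) fun p => hC (p.2 / p.1)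
    have hslope : ContinuousAt (fun q : ℝ × ℝ => q.2 / q.1) p :=
      continuousAt_snd.div continuousAt_fst hp
    exact (hf.continuousAt.comp hslope).sub hslope
  rw [funext (Fmap_eq_add_mul_sub f)]
  exact continuous_fst.prodMk (continuous_snd.add hdisp)

theorem Fmap_id : Fmap id = id := by
  funext p
  simp [Fmap_eq_add_mul_sub]

theorem Fmap_comp (g f : ℝ → ℝ) : Fmap (g ∘ f) = Fmap g ∘ Fmap f := by
  funext ⟨x, y⟩
  by_cases hx : x = 0 <;> simp [Fmap, hx]

theorem leftInverse_Fmap {f g : ℝ → ℝ} (hgf : LeftInverse g f) :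
    LeftInverse (Fmap g) (Fmap f) := by
  rw [leftInverse_iff_comp, ← Fmap_comp, hgf.comp_eq_id, Fmap_id]

theorem stmt0_general (f g : ℝ → ℝ) (hf : Continuous f) (hg : Continuous g)
    (hgf : LeftInverse g f) (hfg : RightInverse g f) {C : ℝ} (hC : ∀ t, ‖f t - t‖ ≤ C) :
    IsHomeomorph (Fmap f) ∧
      LeftInverse (Fmap g) (Fmap f) ∧
      RightInverse (Fmap g) (Fmap f) := by
  have hleft : LeftInverse (Fmap g) (Fmap f) := leftInverse_Fmap hgf
  have hright : RightInverse (Fmap g) (Fmap f) := leftInverse_Fmap hfg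
  have hcont : Continuous (Fmap f) := continuous_Fmap hf hC
  have hcont_inv : Continuous (Fmap g) :=
    continuous_Fmap hg (norm_sub_self_le_of_rightInverse hfg hC)
  exact ⟨isHomeomorph_iff_exists_inverse.2 ⟨hcont, Fmap g, hleft, hright, hcont_inv⟩,
    hleft, hright⟩

/-- If `f` is a homeomorphism of `ℝ` with inverse `g`, equal to the identity outside
`[1/2, 2]`, then `F` is a homeomorphism of the plane with inverse given by the
corresponding map built from `g`. -/
theorem stmt0 (f g : ℝ → ℝ)
    (hf : Continuous f) (hg : Continuous g)
    (hgf : Function.LeftInverse g f) (hfg : Function.RightInverse g f)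
    (hid : ∀ x : ℝ, x ∉ Set.Icc (1/2 : ℝ) 2 → f x = x) :
    IsHomeomorph (Fmap f) ∧
      Function.LeftInverse (Fmap g) (Fmap f) ∧
      Function.RightInverse (Fmap g) (Fmap f) := by
  obtain ⟨C, hC⟩ := exists_norm_sub_self_le_of_eq_self_off_isCompact hf isCompact_Icc hid
  exact stmt0_general f g hf hg hgf hfg hC
end

section
/- Let f : ℝ → ℝ satisfy f(x) = x for all x outside the interval [1/2, 2] and f(1) ≠ 1. Then the map F : ℝ × ℝ → ℝ × ℝ defined by F(x,y) = (x, x·f(y/x)) for x ≠ 0 and F(0,y) = (0,y) is not (Fréchet) differentiable at the origin (0,0). -/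
/- `F` is homogeneous of degree one, and a homogeneous map that is differentiable at the origin
coincides with its derivative there, hence is additive. Applied to `(1, a) = (1, 0) + (0, a)`,
additivity of `F` forces `f a = f 0 + a`. -/

section Homogeneous

variable {𝕜 E F : Type*} [NontriviallyNormedField 𝕜] [NormedAddCommGroup F] [NormedSpace 𝕜 F]
  {g : E → F}

theorem hasLineDerivAt_zero_of_map_smul [AddCommGroup E] [Module 𝕜 E] {v : E}
    (hg : ∀ t : 𝕜, g (t • v) = t • g v) : HasLineDerivAt 𝕜 g (g v) 0 v := by
  simpa only [HasLineDerivAt, zero_add, hg, id_eq, one_smul] using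
    (hasDerivAt_id (0 : 𝕜)).smul_const (g v)

theorem differentiableAt_zero_iff_exists_continuousLinearMap
    [NormedAddCommGroup E] [NormedSpace 𝕜 E] (hg : ∀ (t : 𝕜) (v : E), g (t • v) = t • g v) :
    DifferentiableAt 𝕜 g 0 ↔ ∃ L : E →L[𝕜] F, ⇑L = g := by
  constructor
  · rintro ⟨L, hL⟩
    exact ⟨L, funext fun v =>
      (hL.hasLineDerivAt v).unique (hasLineDerivAt_zero_of_map_smul fun t => hg t v)⟩
  · rintro ⟨L, rfl⟩
    exact L.differentiableAt

end Homogeneous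

namespace Fmap

theorem apply_zero_left (f : ℝ → ℝ) (y : ℝ) : Fmap f (0, y) = (0, y) :=
  if_pos rfl

theorem apply_one_left (f : ℝ → ℝ) (a : ℝ) : Fmap f (1, a) = (1, f a) := by
  simp [Fmap]

theorem map_smul (f : ℝ → ℝ) (t : ℝ) (p : ℝ × ℝ) : Fmap f (t • p) = t • Fmap f p := by
  obtain ⟨x, y⟩ := p
  rcases eq_or_ne t 0 with rfl | ht
  · simp [Fmap]
  rcases eq_or_ne x 0 with rfl | hx
  · simp [Fmap]
  · simp [Fmap, ht, hx, mul_div_mul_left, mul_assoc]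

theorem eq_shear_of_eq_add {f : ℝ → ℝ} {c : ℝ} (hf : ∀ a, f a = c + a) :
    Fmap f = fun p => (p.1, c * p.1 + p.2) := by
  funext ⟨x, y⟩
  rcases eq_or_ne x 0 with rfl | hx
  · simp [Fmap]
  · simp only [Fmap, hx, if_false, hf (y / x), mul_add, mul_div_cancel₀ y hx, mul_comm c x]

end Fmap

theorem stmt1_general (f : ℝ → ℝ) :
    DifferentiableAt ℝ (Fmap f) (0, 0) ↔ ∀ a, f a = f 0 + a := by
  constructor
  · intro hF a
    obtain ⟨L, hL⟩ :=
      (differentiableAt_zero_iff_exists_continuousLinearMap (Fmap.map_smul f)).1 hF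
    have hadd : Fmap f ((1, 0) + (0, a)) = Fmap f (1, 0) + Fmap f (0, a) := by
      rw [← hL, map_add]
    simpa [Fmap.apply_one_left, Fmap.apply_zero_left] using hadd
  · intro hf
    rw [Fmap.eq_shear_of_eq_add hf]
    fun_prop

/-- If `f(x) = x` outside `[1/2, 2]` and `f(1) ≠ 1`, then `F` is not Fréchet
differentiable at the origin. -/
theorem stmt1 (f : ℝ → ℝ)
    (hid : ∀ x : ℝ, x ∉ Set.Icc (1/2 : ℝ) 2 → f x = x)
    (hne : f 1 ≠ 1) :
    ¬ DifferentiableAt ℝ (Fmap f) (0, 0) := by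
  have h0 : f 0 = 0 := hid 0 (by norm_num)
  exact fun hF => hne (by simpa [h0] using (stmt1_general f).1 hF 1)
end

section
/- Let k ∈ ℕ ∪ {∞}, let f : ℝ → ℝ be C^k with f(x) = x for all x outside the interval [1/2, 2], and let g : ℝ → ℝ be C^k. Define h : ℝ → ℝ by h(x) = x·f(g(x)/x) for x ≠ 0 and h(0) = g(0). Then h is C^k, and the map F defined by F(x,y) = (x, x·f(y/x)) for x ≠ 0, F(0,y) = (0,y), maps the graph {(x, g(x)) : x ∈ ℝ} onto the graph {(x, h(x)) : x ∈ ℝ}. (This is the 'direct computation' showing that F maps C^k graph curves to C^k graph curves.) -/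
/-!
Only the point `x = 0` is at issue. If `g 0 ≠ 0`, then `g x / x` is large for small `x`, where `f`
is the identity, so `h = g` near `0`. If `g 0 = 0`, Hadamard's lemma gives `g x = x • u x` with `u`
of class `C^(k-1)`, so `h x = x • f (u x)`. This a priori loses one derivative, but
`x • u' = g' - u` turns `h' = f(u) + x • f'(u) u'` into `f(u) + f'(u) (g' - u)`, which is again of
class `C^(k-1)`. For `k = 0` there is no such `u`, and one uses instead that `f - id` is bounded,
whence `‖h x - g x‖ ≤ C * |x|`.
-/

open Filter Topology Bornology

section Hadamard

variable {E : Type*} [NormedAddCommGroup E] [NormedSpace ℝ E]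

theorem hasDerivAt_partial_fst {G : Type*} [NormedAddCommGroup G] [NormedSpace ℝ G]
    {F : ℝ × G → E} {p : ℝ × G} (hF : DifferentiableAt ℝ F p) :
    HasDerivAt (fun x => F (x, p.2)) (fderiv ℝ F p (1, 0)) p.1 :=
  hF.hasFDerivAt.comp_hasDerivAt p.1 ((hasDerivAt_id p.1).prodMk (hasDerivAt_const p.1 p.2))

theorem hasDerivAt_intervalIntegral_of_contDiff {F : ℝ × ℝ → E} (hF : ContDiff ℝ 1 F)
    (a b x₀ : ℝ) :
    HasDerivAt (fun x => ∫ t in a..b, F (x, t))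
      (∫ t in a..b, fderiv ℝ F (x₀, t) (1, 0)) x₀ := by
  have hcont : Continuous F := hF.continuous
  have hcont' : Continuous fun p => fderiv ℝ F p (1, 0) :=
    (hF.continuous_fderiv one_ne_zero).clm_apply continuous_const
  obtain ⟨C, hC⟩ := ((isCompact_closedBall x₀ 1).prod
    (isCompact_uIcc (a := a) (b := b))).exists_bound_of_continuousOn hcont'.continuousOn
  refine (intervalIntegral.hasDerivAt_integral_of_dominated_loc_of_deriv_le (bound := fun _ => C)
    (F := fun x t => F (x, t)) (F' := fun x t => fderiv ℝ F (x, t) (1, 0))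
    (Metric.closedBall_mem_nhds x₀ one_pos) (.of_forall fun x => ?_) ?_ ?_
    (.of_forall fun t ht x hx => hC (x, t) ⟨hx, Set.uIoc_subset_uIcc ht⟩)
    intervalIntegrable_const (.of_forall fun t _ x _ => ?_)).2
  · exact (hcont.comp (by fun_prop)).aestronglyMeasurable
  · exact (hcont.comp (by fun_prop)).intervalIntegrable a b
  · exact (hcont'.comp (Continuous.prodMk_right x₀)).aestronglyMeasurable
  · exact hasDerivAt_partial_fst (p := (x, t)) (hF.differentiable one_ne_zero _)

theorem contDiff_intervalIntegral_nat {n : ℕ} {F : ℝ × ℝ → E} (hF : ContDiff ℝ n F) (a b : ℝ) :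
    ContDiff ℝ n fun x => ∫ t in a..b, F (x, t) := by
  induction n generalizing F with
  | zero =>
    exact contDiff_zero.2 <| intervalIntegral.continuous_parametric_intervalIntegral_of_continuous'
      (f := fun x t => F (x, t)) hF.continuous a b
  | succ n ih =>
    have hderiv := hasDerivAt_intervalIntegral_of_contDiff
      (hF.of_le (by exact_mod_cast n.succ_pos)) a b
    rw [Nat.cast_succ, contDiff_succ_iff_deriv]
    refine ⟨fun x => (hderiv x).differentiableAt, by simp, ?_⟩
    rw [funext fun x => (hderiv x).deriv]
    exact ih ((hF.fderiv_right le_rfl).clm_apply contDiff_const)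

theorem contDiff_intervalIntegral {n : ℕ∞} {F : ℝ × ℝ → E} (hF : ContDiff ℝ n F) (a b : ℝ) :
    ContDiff ℝ n fun x => ∫ t in a..b, F (x, t) :=
  contDiff_iff_forall_nat_le.2 fun _ hm =>
    contDiff_intervalIntegral_nat (hF.of_le (by exact_mod_cast hm)) a b

theorem dslope_eq_integral_deriv [CompleteSpace E] {g : ℝ → E} (hg : ContDiff ℝ 1 g) (a x : ℝ) :
    dslope g a x = ∫ t in (0 : ℝ)..1, deriv g (a + t * (x - a)) := by
  rcases eq_or_ne x a with rfl | hx
  · simp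
  · have hcont : Continuous (deriv g) := hg.continuous_deriv_one
    have hint := intervalIntegral.integral_unitInterval_deriv_eq_sub
      (f := g) (f' := deriv g) (z₀ := a) (z₁ := x - a)
      (hcont.comp (by fun_prop)).continuousOn
      fun t _ => (hg.differentiable one_ne_zero _).hasDerivAt
    rw [add_sub_cancel, ← sub_smul_dslope] at hint
    exact (smul_right_injective E (sub_ne_zero.2 hx) hint).symm

theorem contDiff_dslope [CompleteSpace E] {n : ℕ∞} {g : ℝ → E} (hg : ContDiff ℝ (n + 1) g)
    (a : ℝ) : ContDiff ℝ n (dslope g a) := by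
  have hg' : ContDiff ℝ n (deriv g) := (contDiff_succ_iff_deriv.1 hg).2.2
  rw [funext (dslope_eq_integral_deriv (hg.of_le le_add_self) a)]
  exact contDiff_intervalIntegral
    (F := fun p => deriv g (a + p.2 * (p.1 - a))) (hg'.comp (by fun_prop)) 0 1

end Hadamard

section SmulCompDslope

variable {E F : Type*} [NormedAddCommGroup E] [NormedSpace ℝ E] [NormedAddCommGroup F]
  [NormedSpace ℝ F]

theorem hasDerivAt_dslope_of_ne {g : ℝ → E} {g' : E} {a x : ℝ} (hg : HasDerivAt g g' x)
    (hx : x ≠ a) : HasDerivAt (dslope g a) ((x - a)⁻¹ • (g' - dslope g a x)) x := by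
  have hxa : x - a ≠ 0 := sub_ne_zero.2 hx
  have hslope := (((hasDerivAt_id x).sub_const a).fun_inv hxa).fun_smul (hg.sub_const (g a))
  refine (hslope.congr_of_eventuallyEq (dslope_eventuallyEq_slope_of_ne g hx)).congr_deriv ?_
  rw [id, ← sub_smul_dslope]
  match_scalars <;> field_simp

theorem hasDerivAt_sub_smul_of_continuousAt {w : ℝ → F} {a : ℝ} (hw : ContinuousAt w a) :
    HasDerivAt (fun x => (x - a) • w x) (w a) a := by
  refine hasDerivAt_iff_tendsto_slope.2 ((hw.tendsto.mono_left nhdsWithin_le_nhds).congr' ?_)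
  filter_upwards [self_mem_nhdsWithin] with x hx
  exact (slope_sub_smul w (Ne.symm hx)).symm

theorem hasDerivAt_sub_smul_comp_dslope {f : E → F} {g : ℝ → E} (hf : Differentiable ℝ f)
    (hg : Differentiable ℝ g) (a x : ℝ) :
    HasDerivAt (fun x => (x - a) • f (dslope g a x))
      (f (dslope g a x) + fderiv ℝ f (dslope g a x) (deriv g x - dslope g a x)) x := by
  rcases eq_or_ne x a with rfl | hx
  · have hcont : ContinuousAt (fun y => f (dslope g x y)) x :=
      hf.continuous.continuousAt.comp (continuousAt_dslope_same.2 (hg x))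
    simpa using hasDerivAt_sub_smul_of_continuousAt hcont
  · have hxa : x - a ≠ 0 := sub_ne_zero.2 hx
    have hcomp := (hf (dslope g a x)).hasFDerivAt.comp_hasDerivAt x
      (hasDerivAt_dslope_of_ne (hg x).hasDerivAt hx)
    refine (((hasDerivAt_id x).sub_const a).fun_smul hcomp).congr_deriv ?_
    rw [map_smul, id, smul_inv_smul₀ hxa, one_smul, add_comm, Function.comp_apply]

theorem contDiff_sub_smul_comp_dslope [CompleteSpace E] {n : ℕ∞} {f : E → F} {g : ℝ → E}
    (hf : ContDiff ℝ (n + 1) f) (hg : ContDiff ℝ (n + 1) g) (a : ℝ) :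
    ContDiff ℝ (n + 1) fun x => (x - a) • f (dslope g a x) := by
  have hderiv := hasDerivAt_sub_smul_comp_dslope (hf.differentiable (by simp))
    (hg.differentiable (by simp)) a
  have hu : ContDiff ℝ n (dslope g a) := contDiff_dslope hg a
  have hg' : ContDiff ℝ n (deriv g) := (contDiff_succ_iff_deriv.1 hg).2.2
  have hf' : ContDiff ℝ n (fderiv ℝ f) := hf.fderiv_right le_rfl
  refine contDiff_succ_iff_deriv.2 ⟨fun x => (hderiv x).differentiableAt, by simp, ?_⟩
  rw [funext fun x => (hderiv x).deriv]
  exact ((hf.of_le le_self_add).comp hu).add ((hf'.comp hu).clm_apply (hg'.sub hu))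

end SmulCompDslope

theorem eventuallyEq_id_cobounded_of_hasCompactSupport_sub {E : Type*} [NormedAddCommGroup E]
    {f : E → E} (hf : HasCompactSupport fun y => f y - y) : f =ᶠ[cobounded E] id := by
  rw [hasCompactSupport_iff_eventuallyEq, coclosedCompact_eq_cocompact] at hf
  exact (hf.filter_mono Metric.cobounded_le_cocompact).mono fun _ => sub_eq_zero.1

section Homogenization

variable {E : Type*} [NormedAddCommGroup E] [NormedSpace ℝ E]

/-- The degree-one homogenization `(x, y) ↦ x • f (x⁻¹ • y)` of `f : E → E`: the second component
of the map `F` of the paper, with `E` in place of `ℝ`. Its value `y` at `x = 0` is the continuous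
extension when `f` is continuous and `f - id` has compact support. -/
noncomputable def homogenization (f : E → E) (p : ℝ × E) : E :=
  if p.1 = 0 then p.2 else p.1 • f (p.1⁻¹ • p.2)

theorem homogenization_zero_left (f : E → E) (y : E) : homogenization f (0, y) = y :=
  if_pos rfl

theorem homogenization_of_ne (f : E → E) {p : ℝ × E} (hp : p.1 ≠ 0) :
    homogenization f p = p.1 • f (p.1⁻¹ • p.2) :=
  if_neg hp

theorem homogenization_smul (f : E → E) (x : ℝ) (y : E) :
    homogenization f (x, x • y) = x • f y := by
  rcases eq_or_ne x 0 with rfl | hx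
  · simp only [zero_smul, homogenization_zero_left]
  · rw [homogenization_of_ne f hx, inv_smul_smul₀ hx]

theorem homogenization_eventuallyEq_snd {f : E → E} (hf : f =ᶠ[cobounded E] id) {y : E}
    (hy : y ≠ 0) : homogenization f =ᶠ[𝓝 (0, y)] Prod.snd := by
  obtain ⟨R, -, hR⟩ := hasBasis_cobounded_norm.eventually_iff.1 hf
  have hlarge : ∀ᶠ p : ℝ × E in 𝓝 (0, y), R * |p.1| < ‖p.2‖ :=
    (isOpen_lt (by fun_prop) (by fun_prop)).mem_nhds (by simpa using hy)
  filter_upwards [hlarge] with ⟨x, z⟩ hxz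
  rcases eq_or_ne x 0 with rfl | hx
  · exact homogenization_zero_left f z
  · have hfz : f (x⁻¹ • z) = x⁻¹ • z := hR <| by
      simpa [norm_smul, inv_mul_eq_div, le_div_iff₀ (abs_pos.2 hx)] using hxz.le
    rw [homogenization_of_ne f hx, hfz, smul_inv_smul₀ hx]

theorem contDiffAt_homogenization {n : WithTop ℕ∞} {f : E → E} (hf : ContDiff ℝ n f)
    (hid : f =ᶠ[cobounded E] id) {p : ℝ × E} (hp : p ≠ 0) :
    ContDiffAt ℝ n (homogenization f) p := by
  rcases eq_or_ne p.1 0 with hp₁ | hp₁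
  · obtain ⟨x, y⟩ := p
    obtain rfl : x = 0 := hp₁
    have hy : y ≠ 0 := fun hy => hp (by rw [hy, Prod.mk_zero_zero])
    exact contDiffAt_snd.congr_of_eventuallyEq (homogenization_eventuallyEq_snd hid hy)
  · have hsmul : homogenization f =ᶠ[𝓝 p] fun q => q.1 • f (q.1⁻¹ • q.2) :=
      (continuousAt_fst.eventually_ne hp₁).mono fun _ => homogenization_of_ne f
    refine ContDiffAt.congr_of_eventuallyEq ?_ hsmul
    exact contDiffAt_fst.smul <| hf.contDiffAt.comp p <|
      (contDiffAt_fst.inv hp₁).smul contDiffAt_snd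

theorem norm_homogenization_sub_snd_le {f : E → E} {C : ℝ} (hC : ∀ y, ‖f y - y‖ ≤ C)
    (p : ℝ × E) : ‖homogenization f p - p.2‖ ≤ C * |p.1| := by
  obtain ⟨x, y⟩ := p
  rcases eq_or_ne x 0 with rfl | hx
  · simp [homogenization_zero_left]
  · calc ‖homogenization f (x, y) - y‖
        = ‖x • (f (x⁻¹ • y) - x⁻¹ • y)‖ := by
          rw [homogenization_of_ne f hx, smul_sub, smul_inv_smul₀ hx]
      _ = ‖f (x⁻¹ • y) - x⁻¹ • y‖ * |x| := by rw [norm_smul, Real.norm_eq_abs, mul_comm]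
      _ ≤ C * |x| := by gcongr; exact hC _

theorem continuousAt_homogenization_zero {f : E → E} {C : ℝ} (hC : ∀ y, ‖f y - y‖ ≤ C) :
    ContinuousAt (homogenization f) 0 := by
  have hbound : Tendsto (fun p : ℝ × E => C * |p.1|) (𝓝 0) (𝓝 0) :=
    Continuous.tendsto' (by fun_prop) _ _ (by simp)
  have hdiff := squeeze_zero_norm (norm_homogenization_sub_snd_le hC) hbound
  have hsnd : Tendsto Prod.snd (𝓝 (0 : ℝ × E)) (𝓝 0) := continuous_snd.tendsto' _ _ rfl
  have h0 : homogenization f (0 : ℝ × E) = 0 := homogenization_zero_left f 0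
  simpa [ContinuousAt, h0] using hdiff.add hsnd

theorem continuous_homogenization {f : E → E} (hf : Continuous f)
    (hsupp : HasCompactSupport fun y => f y - y) : Continuous (homogenization f) := by
  refine continuous_iff_continuousAt.2 fun p => ?_
  rcases eq_or_ne p 0 with rfl | hp
  · obtain ⟨C, hC⟩ := hsupp.exists_bound_of_continuous (hf.sub continuous_id)
    exact continuousAt_homogenization_zero hC
  · exact (contDiffAt_homogenization (n := 0) (contDiff_zero.2 hf)
      (eventuallyEq_id_cobounded_of_hasCompactSupport_sub hsupp) hp).continuousAt

theorem contDiff_homogenization_graph_of_map_zero [CompleteSpace E] {n : ℕ∞} {f : E → E}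
    {g : ℝ → E} (hf : ContDiff ℝ (n + 1) f) (hg : ContDiff ℝ (n + 1) g) (hg₀ : g 0 = 0) :
    ContDiff ℝ (n + 1) fun x => homogenization f (x, g x) := by
  have hadamard (x : ℝ) : g x = x • dslope g 0 x := by
    simpa [hg₀] using (sub_smul_dslope g 0 x).symm
  have heq (x : ℝ) : homogenization f (x, g x) = (x - 0) • f (dslope g 0 x) := by
    rw [hadamard, homogenization_smul, sub_zero]
  simpa only [heq] using contDiff_sub_smul_comp_dslope hf hg 0

theorem contDiff_homogenization_graph [CompleteSpace E] {k : ℕ∞} {f : E → E} {g : ℝ → E}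
    (hf : ContDiff ℝ k f) (hsupp : HasCompactSupport fun y => f y - y) (hg : ContDiff ℝ k g) :
    ContDiff ℝ k fun x => homogenization f (x, g x) := by
  rcases eq_or_ne k 0 with rfl | hk
  · exact contDiff_zero.2 <| (continuous_homogenization hf.continuous hsupp).comp <|
      continuous_id.prodMk hg.continuous
  obtain ⟨n, rfl⟩ : ∃ n, k = n + 1 :=
    ⟨k - 1, (tsub_add_cancel_of_le (Order.one_le_iff_ne_zero.2 hk)).symm⟩
  by_cases hg₀ : g 0 = 0
  · exact contDiff_homogenization_graph_of_map_zero hf hg hg₀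
  refine contDiff_iff_contDiffAt.2 fun x => ?_
  have hx : (x, g x) ≠ 0 := by
    intro hx
    obtain ⟨rfl, hgx⟩ := Prod.mk_eq_zero.1 hx
    exact hg₀ hgx
  exact (contDiffAt_homogenization hf
    (eventuallyEq_id_cobounded_of_hasCompactSupport_sub hsupp) hx).comp x
      (contDiffAt_id.prodMk hg.contDiffAt)

end Homogenization

theorem image_graph_fst_prodMk {α β γ : Type*} (H : α × β → γ) (g : α → β) :
    (fun p => (p.1, H p)) '' {p | ∃ x, p = (x, g x)} = {p | ∃ x, p = (x, H (x, g x))} := by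
  ext p
  constructor
  · rintro ⟨_, ⟨x, rfl⟩, rfl⟩
    exact ⟨x, rfl⟩
  · rintro ⟨x, rfl⟩
    exact ⟨(x, g x), ⟨x, rfl⟩, rfl⟩

theorem Fmap_eq_prodMk_homogenization (f : ℝ → ℝ) :
    Fmap f = fun p => (p.1, homogenization f p) := by
  funext ⟨x, y⟩
  by_cases hx : x = 0 <;> simp [Fmap, homogenization, hx, div_eq_inv_mul]

theorem eq_homogenization_graph {f g h : ℝ → ℝ}
    (hdef : ∀ x, h x = if x = 0 then g 0 else x * f (g x / x)) :
    h = fun x => homogenization f (x, g x) := by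
  funext x
  by_cases hx : x = 0 <;> simp [hdef, homogenization, hx, div_eq_inv_mul]

theorem stmt3_general {E : Type*} [NormedAddCommGroup E] [NormedSpace ℝ E] [CompleteSpace E]
    (k : ℕ∞) {f : E → E} {g : ℝ → E} (hf : ContDiff ℝ k f)
    (hsupp : HasCompactSupport fun y => f y - y) (hg : ContDiff ℝ k g) :
    ContDiff ℝ k (fun x => homogenization f (x, g x)) ∧
      (fun p => (p.1, homogenization f p)) '' {p : ℝ × E | ∃ x : ℝ, p = (x, g x)} =
        {p : ℝ × E | ∃ x : ℝ, p = (x, homogenization f (x, g x))} :=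
  ⟨contDiff_homogenization_graph hf hsupp hg, image_graph_fst_prodMk _ g⟩

/-- If `f` is `C^k` and equals the identity outside `[1/2, 2]`, and `g` is `C^k`,
then `h(x) = x·f(g(x)/x)` (with `h(0) = g(0)`) is `C^k`, and `F` maps the graph
of `g` onto the graph of `h`. -/
theorem stmt3 (k : ℕ∞) (f g : ℝ → ℝ)
    (hf : ContDiff ℝ k f)
    (hid : ∀ x : ℝ, x ∉ Set.Icc (1/2 : ℝ) 2 → f x = x)
    (hg : ContDiff ℝ k g)
    (h : ℝ → ℝ)
    (hdef : ∀ x : ℝ, h x = if x = 0 then g 0 else x * f (g x / x)) :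
    ContDiff ℝ k h ∧
      Fmap f '' {p : ℝ × ℝ | ∃ x : ℝ, p = (x, g x)} =
        {p : ℝ × ℝ | ∃ x : ℝ, p = (x, h x)} := by
  obtain rfl := eq_homogenization_graph hdef
  exact Fmap_eq_prodMk_homogenization f ▸ stmt3_general k hf
    (.intro isCompact_Icc fun y hy => sub_eq_zero.2 (hid y hy)) hg
end

section
/- The map M : ℝ × ℝ → ℝ × ℝ defined by M(x,y) = (x·m(x,y), y·m(x,y)), where m(x,y) = x/√(x² + y²) + 2 for (x,y) ≠ (0,0) and m(0,0) = 2, is a homeomorphism of the plane; moreover its inverse is the map sending (0,0) to (0,0) and sending w ≠ (0,0) to (1/m(w))·w, i.e. the inverse divides each nonzero vector w by the same angular factor m(w) = w₁/‖w‖ + 2. -/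
/-- The angular factor `m(x,y) = x/√(x² + y²) + 2` for `(x,y) ≠ (0,0)`, `m(0,0) = 2`. -/
noncomputable def mfun (p : ℝ × ℝ) : ℝ :=
  if p = (0, 0) then 2 else p.1 / Real.sqrt (p.1 ^ 2 + p.2 ^ 2) + 2

/-- The map `M(x,y) = (x·m(x,y), y·m(x,y))`. -/
noncomputable def Mmap (p : ℝ × ℝ) : ℝ × ℝ :=
  (p.1 * mfun p, p.2 * mfun p)

/-- The candidate inverse of `M`: it sends `(0,0)` to `(0,0)` and divides each
nonzero vector `w` by the angular factor `m(w)`. -/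
noncomputable def Minv (p : ℝ × ℝ) : ℝ × ℝ :=
  if p = (0, 0) then (0, 0) else (1 / mfun p) • p

/-!
`M` multiplies each vector by a scalar that depends only on its direction. Rescaling along a ray
does not change that scalar, so dividing by it undoes `M`. The scalar lies in `[1, 3]`, and it is
continuous away from the origin; boundedness of the scalar and of its reciprocal is what gives
continuity of `M` and of its inverse at the origin, where the scalar itself is discontinuous.
-/

open Filter Function Set Topology

/-- The radial scaling of `X` by the scalar function `f`: each point `x` is moved to `f x • x`.
For `f` constant along rays it maps every ray to itself linearly; both `M` and its inverse are of
this form. -/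
def radialScaling {𝕜 X : Type*} [SMul 𝕜 X] (f : X → 𝕜) (x : X) : X :=
  f x • x

section Inverse

variable {𝕜 X : Type*} [GroupWithZero 𝕜] [MulAction 𝕜 X] {f : X → 𝕜}

theorem leftInverse_radialScaling_inv (hne : ∀ x, f x ≠ 0) (hsmul : ∀ x, f (f x • x) = f x) :
    LeftInverse (radialScaling f⁻¹) (radialScaling f) := fun x ↦ by
  simp only [radialScaling, Pi.inv_apply, hsmul, inv_smul_smul₀ (hne x)]

theorem rightInverse_radialScaling_inv (hne : ∀ x, f x ≠ 0)
    (hsmul : ∀ x, f ((f x)⁻¹ • x) = f x) :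
    RightInverse (radialScaling f⁻¹) (radialScaling f) := fun x ↦ by
  simp only [radialScaling, Pi.inv_apply, hsmul, smul_inv_smul₀ (hne x)]

end Inverse

section Continuity

variable {𝕜 E : Type*} [NormedField 𝕜] [SeminormedAddCommGroup E] [NormedSpace 𝕜 E] {f : E → 𝕜}

theorem continuous_radialScaling (hcont : ∀ x ≠ 0, ContinuousAt f x)
    (hbdd : IsBoundedUnder (· ≤ ·) (𝓝 0) (norm ∘ f)) : Continuous (radialScaling f) := by
  refine continuous_iff_continuousAt.2 fun x ↦ ?_
  obtain rfl | hx := eq_or_ne x 0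
  · rw [ContinuousAt, radialScaling, smul_zero]
    exact hbdd.smul_tendsto_zero tendsto_id
  · exact (hcont x hx).smul continuousAt_id

theorem isHomeomorph_radialScaling (hne : ∀ x, f x ≠ 0) (hsmul : ∀ x, f (f x • x) = f x)
    (hinv_smul : ∀ x, f ((f x)⁻¹ • x) = f x) (hcont : ∀ x ≠ 0, ContinuousAt f x)
    (hbdd : IsBoundedUnder (· ≤ ·) (𝓝 0) (norm ∘ f))
    (hbdd_inv : IsBoundedUnder (· ≤ ·) (𝓝 0) (norm ∘ f⁻¹)) :
    IsHomeomorph (radialScaling f) :=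
  isHomeomorph_iff_exists_inverse.2 ⟨continuous_radialScaling hcont hbdd, radialScaling f⁻¹,
    leftInverse_radialScaling_inv hne hsmul, rightInverse_radialScaling_inv hne hinv_smul,
    continuous_radialScaling (fun x hx ↦ (hcont x hx).inv₀ (hne x)) hbdd_inv⟩

end Continuity

section AngularFactor

theorem fst_sq_add_snd_sq_pos {R : Type*} [Ring R] [LinearOrder R] [IsStrictOrderedRing R]
    {p : R × R} (hp : p ≠ 0) : 0 < p.1 ^ 2 + p.2 ^ 2 := by
  obtain h | h : p.1 ≠ 0 ∨ p.2 ≠ 0 := by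
    simpa only [ne_eq, Prod.ext_iff, Prod.fst_zero, Prod.snd_zero, not_and_or] using hp
  · exact add_pos_of_pos_of_nonneg (sq_pos_of_ne_zero h) (sq_nonneg _)
  · exact add_pos_of_nonneg_of_pos (sq_nonneg _) (sq_pos_of_ne_zero h)

theorem abs_div_sqrt_sq_add_sq_le_one (x y : ℝ) : |x / √(x ^ 2 + y ^ 2)| ≤ 1 := by
  rw [abs_div, abs_of_nonneg (Real.sqrt_nonneg _)]
  exact div_le_one_of_le₀ (Real.abs_le_sqrt (le_add_of_nonneg_right (sq_nonneg y)))
    (Real.sqrt_nonneg _)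

theorem mul_div_sqrt_mul_sq_add_mul_sq {c : ℝ} (hc : 0 < c) (x y : ℝ) :
    c * x / √((c * x) ^ 2 + (c * y) ^ 2) = x / √(x ^ 2 + y ^ 2) := by
  rw [mul_pow, mul_pow, ← mul_add, Real.sqrt_mul (sq_nonneg c), Real.sqrt_sq hc.le,
    mul_div_mul_left _ _ hc.ne']

-- At the origin the quotient is `0 / 0 = 0`, which agrees with the value `m(0,0) = 2`.
theorem mfun_eq_div_sqrt_add_two (p : ℝ × ℝ) : mfun p = p.1 / √(p.1 ^ 2 + p.2 ^ 2) + 2 := by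
  obtain rfl | hp := eq_or_ne p (0, 0)
  · simp [mfun]
  · exact if_neg hp

theorem mfun_mem_Icc (p : ℝ × ℝ) : mfun p ∈ Icc 1 3 := by
  obtain ⟨hlower, hupper⟩ := abs_le.1 (abs_div_sqrt_sq_add_sq_le_one p.1 p.2)
  rw [mfun_eq_div_sqrt_add_two]
  constructor <;> linarith

theorem mfun_pos (p : ℝ × ℝ) : 0 < mfun p :=
  one_pos.trans_le (mfun_mem_Icc p).1

theorem mfun_smul {c : ℝ} (hc : 0 < c) (p : ℝ × ℝ) : mfun (c • p) = mfun p := by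
  simp only [mfun_eq_div_sqrt_add_two, Prod.smul_fst, Prod.smul_snd, smul_eq_mul,
    mul_div_sqrt_mul_sq_add_mul_sq hc]

theorem continuousAt_mfun {p : ℝ × ℝ} (hp : p ≠ 0) : ContinuousAt mfun p := by
  have hsqrt : √(p.1 ^ 2 + p.2 ^ 2) ≠ 0 := Real.sqrt_ne_zero'.2 (fst_sq_add_snd_sq_pos hp)
  rw [funext mfun_eq_div_sqrt_add_two]
  fun_prop (disch := assumption)

theorem isBoundedUnder_norm_mfun (l : Filter (ℝ × ℝ)) :
    IsBoundedUnder (· ≤ ·) l (norm ∘ mfun) :=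
  isBoundedUnder_of ⟨3, fun p ↦ (Real.norm_of_nonneg (mfun_pos p).le).trans_le (mfun_mem_Icc p).2⟩

theorem isBoundedUnder_norm_mfun_inv (l : Filter (ℝ × ℝ)) :
    IsBoundedUnder (· ≤ ·) l (norm ∘ mfun⁻¹) :=
  isBoundedUnder_of ⟨1, fun p ↦ (Real.norm_of_nonneg (inv_pos.2 (mfun_pos p)).le).trans_le
    (inv_le_one_of_one_le₀ (mfun_mem_Icc p).1)⟩

theorem Mmap_eq_radialScaling : Mmap = radialScaling mfun :=
  funext fun _ ↦ Prod.ext (mul_comm _ _) (mul_comm _ _)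

theorem Minv_eq_radialScaling : Minv = radialScaling mfun⁻¹ := by
  funext p
  obtain rfl | hp := eq_or_ne p (0, 0)
  · simp [Minv, radialScaling]
  · simp only [Minv, radialScaling, if_neg hp, one_div, Pi.inv_apply]

end AngularFactor

/-- `M` is a homeomorphism of the plane, with inverse `Minv`. -/
theorem stmt4 :
    IsHomeomorph Mmap ∧
      Function.LeftInverse Minv Mmap ∧
      Function.RightInverse Minv Mmap := by
  have hne (p : ℝ × ℝ) : mfun p ≠ 0 := (mfun_pos p).ne'
  have hsmul (p : ℝ × ℝ) : mfun (mfun p • p) = mfun p := mfun_smul (mfun_pos p) p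
  have hinv_smul (p : ℝ × ℝ) : mfun ((mfun p)⁻¹ • p) = mfun p :=
    mfun_smul (inv_pos.2 (mfun_pos p)) p
  rw [Mmap_eq_radialScaling, Minv_eq_radialScaling]
  exact ⟨isHomeomorph_radialScaling hne hsmul hinv_smul (fun _ ↦ continuousAt_mfun)
      (isBoundedUnder_norm_mfun _) (isBoundedUnder_norm_mfun_inv _),
    leftInverse_radialScaling_inv hne hsmul, rightInverse_radialScaling_inv hne hinv_smul⟩
end

section
/- Let γ : ℝ → ℝ × ℝ be γ(t) = M(t, t²), with component functions x(t) and y(t), which are twice differentiable for t ≠ 0. Define for t ≠ 0 the signed curvature κ(t) = (x'(t)·y''(t) − y'(t)·x''(t)) / (x'(t)² + y'(t)²)^{3/2}. Then κ(t) tends to 2/3 as t → 0 from the right and tends to 2 as t → 0 from the left. (Thus the image under M of the parabola y = x², which has curvature 2 at the origin, has a jump discontinuity in curvature at the origin.) -/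
/-- The parametrization `γ(t) = M(t, t²)` of the image of the parabola. -/
noncomputable def gam (t : ℝ) : ℝ × ℝ := Mmap (t, t ^ 2)

/-- The first component `x(t)` of `γ`. -/
noncomputable def gamx (t : ℝ) : ℝ := (gam t).1

/-- The second component `y(t)` of `γ`. -/
noncomputable def gamy (t : ℝ) : ℝ := (gam t).2

/-- The signed curvature of the planar curve `γ`,
`κ = (x'·y'' − y'·x'') / (x'² + y'²)^(3/2)`. -/
noncomputable def kappa (t : ℝ) : ℝ :=
  (deriv gamx t * deriv (deriv gamy) t - deriv gamy t * deriv (deriv gamx) t) /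
    (deriv gamx t ^ 2 + deriv gamy t ^ 2) ^ ((3 : ℝ) / 2)

/-!
The map `M` rescales each half-line from the origin by a constant which, as the slope `s` tends to
`0`, tends to `3` on the right half-plane and to `1` on the left one. On each side of `0` the curve
`γ` therefore coincides with a curve `t ↦ (t φ(t), t² φ(t))` that is smooth and regular at `0`, so
that the one-sided limit of its curvature is the curvature of this extension. Rescaling a curve
tangent to the horizontal axis by `φ` divides its curvature at the origin by `|φ(0)|`, which turns
the curvature `2` of the parabola into `2 / 3` and `2 / 1`.
-/

open Filter Set Topology

/-- The signed curvature `(x'y'' - y'x'') / (x'² + y'²)^(3/2)` of the plane curve `(x, y)` at the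
parameter `t`. The coordinates are kept as separate functions so that each can be replaced by a
smooth extension. -/
noncomputable def signedCurvature (x y : ℝ → ℝ) (t : ℝ) : ℝ :=
  (deriv x t * deriv (deriv y) t - deriv y t * deriv (deriv x) t) /
    (deriv x t ^ 2 + deriv y t ^ 2) ^ ((3 : ℝ) / 2)

theorem kappa_eq_signedCurvature : kappa = signedCurvature gamx gamy := rfl

section SignedCurvature

variable {x y x₀ y₀ : ℝ → ℝ} {a : ℝ} {U : Set ℝ}

theorem eqOn_signedCurvature (hU : IsOpen U) (hx : EqOn x x₀ U) (hy : EqOn y y₀ U) :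
    EqOn (signedCurvature x y) (signedCurvature x₀ y₀) U := by
  intro t ht
  have hx' := hx.deriv hU
  have hy' := hy.deriv hU
  simp only [signedCurvature, hx' ht, hy' ht, hx'.deriv hU ht, hy'.deriv hU ht]

theorem continuousAt_signedCurvature (hx : ContDiffAt ℝ 2 x a) (hy : ContDiffAt ℝ 2 y a)
    (hreg : deriv x a ^ 2 + deriv y a ^ 2 ≠ 0) : ContinuousAt (signedCurvature x y) a := by
  have hx' : ContDiffAt ℝ 1 (deriv x) a := hx.derivWithin (by norm_num)
  have hy' : ContDiffAt ℝ 1 (deriv y) a := hy.derivWithin (by norm_num)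
  have hx'' : ContDiffAt ℝ 0 (deriv (deriv x)) a := hx'.derivWithin (by norm_num)
  have hy'' : ContDiffAt ℝ 0 (deriv (deriv y)) a := hy'.derivWithin (by norm_num)
  have hspeed : ContinuousAt (fun t => deriv x t ^ 2 + deriv y t ^ 2) a :=
    (hx'.continuousAt.pow 2).add (hy'.continuousAt.pow 2)
  exact ((hx'.continuousAt.mul hy''.continuousAt).sub
    (hy'.continuousAt.mul hx''.continuousAt)).div (hspeed.rpow_const (Or.inl hreg))
    (Real.rpow_pos_of_pos (lt_of_le_of_ne (by positivity) hreg.symm) _).ne'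

theorem tendsto_signedCurvature_of_eqOn (hU : IsOpen U) (hxU : EqOn x x₀ U) (hyU : EqOn y y₀ U)
    (hx₀ : ContDiffAt ℝ 2 x₀ a) (hy₀ : ContDiffAt ℝ 2 y₀ a)
    (hreg : deriv x₀ a ^ 2 + deriv y₀ a ^ 2 ≠ 0) :
    Tendsto (signedCurvature x y) (𝓝[U] a) (𝓝 (signedCurvature x₀ y₀ a)) :=
  (continuousAt_signedCurvature hx₀ hy₀ hreg).continuousWithinAt.tendsto.congr'
    (eqOn_signedCurvature hU hxU hyU).symm.eventuallyEq_nhdsWithin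

theorem signedCurvature_of_deriv_snd_eq_zero (hy : deriv y a = 0) :
    signedCurvature x y a = deriv x a * deriv (deriv y) a / |deriv x a| ^ 3 := by
  have hspeed : (deriv x a ^ 2) ^ ((3 : ℝ) / 2) = |deriv x a| ^ 3 := by
    rw [Real.rpow_div_two_eq_sqrt _ (sq_nonneg _), Real.sqrt_sq_eq_abs]
    exact Real.rpow_natCast _ 3
  simp only [signedCurvature, hy, zero_mul, sub_zero, ne_eq, OfNat.ofNat_ne_zero,
    not_false_eq_true, zero_pow, add_zero, hspeed]

end SignedCurvature

section RescaledGraph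

variable {g φ : ℝ → ℝ} {a : ℝ}

theorem deriv_id_mul_at_zero (hφ : DifferentiableAt ℝ φ 0) :
    deriv (fun t => t * φ t) 0 = φ 0 := by
  simpa using ((hasDerivAt_id (0 : ℝ)).fun_mul hφ.hasDerivAt).deriv

theorem deriv_mul_of_eq_zero (hg : DifferentiableAt ℝ g a) (hφ : DifferentiableAt ℝ φ a)
    (hga : g a = 0) (hga' : deriv g a = 0) : deriv (fun t => g t * φ t) a = 0 := by
  rw [deriv_fun_mul hg hφ, hga, hga', zero_mul, zero_mul, add_zero]

theorem deriv_deriv_mul_of_eq_zero (hg : ContDiffAt ℝ 2 g a) (hφ : ContDiffAt ℝ 2 φ a)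
    (hga : g a = 0) (hga' : deriv g a = 0) :
    deriv (deriv fun t => g t * φ t) a = deriv (deriv g) a * φ a := by
  have leibniz := iteratedDeriv_fun_mul (n := 2) hg hφ
  simpa [Finset.sum_range_succ, iteratedDeriv_succ, hga, hga'] using leibniz

theorem signedCurvature_rescaled_graph (hg : ContDiffAt ℝ 2 g 0) (hφ : ContDiffAt ℝ 2 φ 0)
    (hg0 : g 0 = 0) (hg0' : deriv g 0 = 0) (hφ0 : φ 0 ≠ 0) :
    signedCurvature (fun t => t * φ t) (fun t => g t * φ t) 0 = deriv (deriv g) 0 / |φ 0| := by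
  have hφd : DifferentiableAt ℝ φ 0 := hφ.differentiableAt two_ne_zero
  have hgd : DifferentiableAt ℝ g 0 := hg.differentiableAt two_ne_zero
  rw [signedCurvature_of_deriv_snd_eq_zero (deriv_mul_of_eq_zero hgd hφd hg0 hg0'),
    deriv_id_mul_at_zero hφd, deriv_deriv_mul_of_eq_zero hg hφ hg0 hg0']
  have hφabs : |φ 0| ≠ 0 := abs_ne_zero.mpr hφ0
  calc φ 0 * (deriv (deriv g) 0 * φ 0) / |φ 0| ^ 3
      = deriv (deriv g) 0 * |φ 0| ^ 2 / |φ 0| ^ 3 := by rw [sq_abs]; ring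
    _ = deriv (deriv g) 0 / |φ 0| := by field_simp

end RescaledGraph

theorem tendsto_kappa_of_mfun_eq {φ : ℝ → ℝ} {U : Set ℝ} (hU : IsOpen U)
    (hφ : ContDiffAt ℝ 2 φ 0) (hφ0 : φ 0 ≠ 0) (hφU : ∀ t ∈ U, mfun (t, t ^ 2) = φ t) :
    Tendsto kappa (𝓝[U] 0) (𝓝 (2 / |φ 0|)) := by
  have hgamx : EqOn gamx (fun t => t * φ t) U := fun t ht => congrArg (t * ·) (hφU t ht)
  have hgamy : EqOn gamy (fun t => t ^ 2 * φ t) U := fun t ht => congrArg (t ^ 2 * ·) (hφU t ht)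
  have hsq : ContDiffAt ℝ 2 (fun t : ℝ => t ^ 2) 0 := by fun_prop
  have hderiv : deriv (fun t : ℝ => t ^ 2) = fun t => 2 * t := by ext t; simp
  have hsq' : deriv (fun t : ℝ => t ^ 2) 0 = 0 := by simp
  have hsq'' : deriv (deriv fun t : ℝ => t ^ 2) 0 = 2 := by simp [hderiv]
  have hreg : deriv (fun t => t * φ t) 0 ^ 2 + deriv (fun t => t ^ 2 * φ t) 0 ^ 2 ≠ 0 := by
    rw [deriv_id_mul_at_zero (hφ.differentiableAt two_ne_zero)]
    positivity
  rw [kappa_eq_signedCurvature, ← hsq'',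
    ← signedCurvature_rescaled_graph hsq hφ (zero_pow two_ne_zero) hsq' hφ0]
  exact tendsto_signedCurvature_of_eqOn hU hgamx hgamy (contDiffAt_id.mul hφ) (hsq.mul hφ) hreg

/-- The value `ε / √(1 + s²) + 2` of `mfun` on the half-line of slope `s` from the origin, where
`ε = ±1` is the sign of the abscissa. Fixing `ε` while `s` varies through `0` gives the smooth
continuation of either branch; `ε = 0` matches the value `2` at the origin itself. -/
noncomputable def rayFactor (ε s : ℝ) : ℝ := ε / √(1 + s ^ 2) + 2

theorem rayFactor_zero (ε : ℝ) : rayFactor ε 0 = ε + 2 := by simp [rayFactor]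

theorem contDiff_rayFactor (ε : ℝ) {n : WithTop ℕ∞} : ContDiff ℝ n (rayFactor ε) := by
  have hpos (s : ℝ) : 0 < 1 + s ^ 2 := by positivity
  have hsqrt : ContDiff ℝ n fun s : ℝ => √(1 + s ^ 2) :=
    ContDiff.sqrt (by fun_prop) fun s => (hpos s).ne'
  exact (contDiff_const.div hsqrt fun s => (Real.sqrt_pos.mpr (hpos s)).ne').add contDiff_const

theorem mfun_mul_slope (t s : ℝ) : mfun (t, t * s) = rayFactor (Real.sign t) s := by
  rcases eq_or_ne t 0 with rfl | ht
  · simp [mfun, rayFactor]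
  have hnorm : √(t ^ 2 + (t * s) ^ 2) = |t| * √(1 + s ^ 2) := by
    rw [← Real.sqrt_sq_eq_abs, ← Real.sqrt_mul (sq_nonneg t)]
    ring_nf
  have hsign : t / |t| = Real.sign t := by
    rcases ht.lt_or_gt with ht | ht
    · rw [abs_of_neg ht, Real.sign_of_neg ht, div_neg, div_self ht.ne]
    · rw [abs_of_pos ht, Real.sign_of_pos ht, div_self ht.ne']
  simp [mfun, rayFactor, ht, hnorm, ← div_div, hsign]

theorem tendsto_kappa_of_sign_eq {ε : ℝ} {U : Set ℝ} (hU : IsOpen U) (hε : ε + 2 ≠ 0)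
    (hsign : ∀ t ∈ U, Real.sign t = ε) : Tendsto kappa (𝓝[U] 0) (𝓝 (2 / |ε + 2|)) := by
  rw [← rayFactor_zero] at hε ⊢
  refine tendsto_kappa_of_mfun_eq hU (contDiff_rayFactor ε).contDiffAt hε fun t ht => ?_
  rw [pow_two, mfun_mul_slope, hsign t ht]

/-- The signed curvature of `γ` tends to `2/3` as `t → 0⁺` and to `2` as `t → 0⁻`. -/
theorem stmt8 :
    Filter.Tendsto kappa (nhdsWithin 0 (Set.Ioi 0)) (nhds ((2 : ℝ) / 3)) ∧
    Filter.Tendsto kappa (nhdsWithin 0 (Set.Iio 0)) (nhds (2 : ℝ)) := by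
  have hright := tendsto_kappa_of_sign_eq (ε := 1) isOpen_Ioi (by norm_num)
    fun _ ht => Real.sign_of_pos ht
  have hleft := tendsto_kappa_of_sign_eq (ε := -1) isOpen_Iio (by norm_num)
    fun _ ht => Real.sign_of_neg ht
  norm_num at hright hleft
  exact ⟨hright, hleft⟩
end

section
/- Let γ : ℝ → ℝ × ℝ be γ(t) = M(t, t²). Suppose δ > 0 and h : ℝ → ℝ is a function such that for every t with |t| < δ, the point γ(t) lies on the graph of h, i.e. (γ(t)).2 = h((γ(t)).1). Then the derivative of h is not differentiable at 0; in particular h is not twice differentiable at 0, so the image under M of the parabola y = x² is not (locally at the origin) the graph of any C² function. (This shows M does not map every C^k curve to a C^k curve for any k ≥ 2.) -/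
/-!
For `t ≠ 0` of sign `e = ±1`, the curve is `γ(t) = (t k(t), t² k(t))` with the smooth factor
`k(t) = 2 + e / √(1 + t²)`. Since `k(0) = 2 + e > 0`, the first coordinate has a smooth local
inverse `g` with `g'(0) = 1 / (2 + e)`, so `h` agrees with the smooth function `u ↦ u g(u)` on the
side of `0` where `u` has sign `e`. If `h'` were differentiable at `0`, then `h''(0)` would be the
second derivative `2 g'(0) = 2 / (2 + e)` of this function for both signs, but `2/3 ≠ 2`.
-/

open Filter Topology Set

section OneSidedAgreement

variable {𝕜 F : Type*} [NontriviallyNormedField 𝕜] [NormedAddCommGroup F] [NormedSpace 𝕜 F]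
  {f g : 𝕜 → F} {s : Set 𝕜} {a : 𝕜}

lemma deriv_eventuallyEq_nhdsWithin (hs : IsOpen s) (hfg : f =ᶠ[𝓝[s] a] g) :
    deriv f =ᶠ[𝓝[s] a] deriv g := by
  filter_upwards [eventually_eventually_nhdsWithin.2 hfg, self_mem_nhdsWithin] with x hx hxs
  rw [hs.nhdsWithin_eq hxs] at hx
  exact EventuallyEq.deriv_eq hx

lemma deriv_eq_of_eventuallyEq_nhdsWithin (hs : UniqueDiffWithinAt 𝕜 s a)
    (hfg : f =ᶠ[𝓝[s] a] g) (hf : DifferentiableAt 𝕜 f a) (hg : DifferentiableAt 𝕜 g a) :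
    deriv f a = deriv g a := by
  have : (𝓝[s] a).NeBot := mem_closure_iff_nhdsWithin_neBot.1 hs.mem_closure
  have hfga : f a = g a :=
    tendsto_nhds_unique_of_eventuallyEq (hf.continuousAt.mono_left nhdsWithin_le_nhds)
      (hg.continuousAt.mono_left nhdsWithin_le_nhds) hfg
  exact hs.eq_deriv s hf.hasDerivAt.hasDerivWithinAt
    (hg.hasDerivAt.hasDerivWithinAt.congr_of_eventuallyEq hfg hfga)

end OneSidedAgreement

lemma deriv_deriv_id_mul_zero {𝕜 : Type*} [NontriviallyNormedField 𝕜] {g : 𝕜 → 𝕜}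
    (hg : ContDiffAt 𝕜 2 g 0) : deriv (deriv fun u ↦ u * g u) 0 = 2 * deriv g 0 := by
  have hderiv : deriv (fun u ↦ u * g u) =ᶠ[𝓝 0] fun u ↦ g u + u * deriv g u := by
    filter_upwards [hg.eventually (by simp)] with u hu
    simpa using ((hasDerivAt_id' u).fun_mul (hu.differentiableAt two_ne_zero).hasDerivAt).deriv
  have hg' : DifferentiableAt 𝕜 (deriv g) 0 :=
    (hg.derivWithin (m := 1) (by norm_num)).differentiableAt one_ne_zero
  rw [hderiv.deriv_eq]
  have := (hg.differentiableAt two_ne_zero).hasDerivAt.fun_add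
    ((hasDerivAt_id' (0 : 𝕜)).fun_mul hg'.hasDerivAt)
  simpa [two_mul] using this.deriv

lemma exists_contDiffAt_right_inverse {𝕜 : Type*} [RCLike 𝕜] {n : WithTop ℕ∞} {f : 𝕜 → 𝕜}
    {f' a : 𝕜} (hf : ContDiffAt 𝕜 n f a) (hn : n ≠ 0) (hf' : HasDerivAt f f' a) (h0 : f' ≠ 0) :
    ∃ g : 𝕜 → 𝕜, ContDiffAt 𝕜 n g (f a) ∧ g (f a) = a ∧ HasDerivAt g f'⁻¹ (f a) ∧
      ∀ᶠ u in 𝓝 (f a), f (g u) = u := by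
  have hs : HasStrictDerivAt f f' a := hf.hasStrictDerivAt' hf' hn
  have he := hs.hasStrictFDerivAt_equiv h0
  exact ⟨hs.localInverse f f' a h0, hf.to_localInverse he.hasFDerivAt hn,
    he.localInverse_apply_image, (hs.to_localInverse h0).hasDerivAt, hs.eventually_right_inverse h0⟩

section Graph

variable {k h : ℝ → ℝ} {s : Set ℝ}

lemma exists_eventuallyEq_id_mul_of_graph (hk : ContDiffAt ℝ 2 k 0) (hk0 : 0 < k 0)
    (hs_cone : ∀ ⦃r t : ℝ⦄, 0 < r → t * r ∈ s → t ∈ s)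
    (hgraph : ∀ᶠ t in 𝓝[s] 0, t ^ 2 * k t = h (t * k t)) :
    ∃ g : ℝ → ℝ, ContDiffAt ℝ 2 g 0 ∧ deriv g 0 = (k 0)⁻¹ ∧
      h =ᶠ[𝓝[s] 0] fun u ↦ u * g u := by
  have hderiv : HasDerivAt (fun t ↦ t * k t) (k 0) 0 := by
    simpa using (hasDerivAt_id' (0 : ℝ)).fun_mul (hk.differentiableAt two_ne_zero).hasDerivAt
  obtain ⟨g, hg, hg0, hg', hright⟩ :=
    exists_contDiffAt_right_inverse (contDiffAt_id.mul hk) two_ne_zero hderiv hk0.ne'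
  simp only [id, zero_mul] at hg hg0 hg' hright
  have hg_tendsto : Tendsto g (𝓝 0) (𝓝 0) := by simpa only [hg0] using hg.continuousAt.tendsto
  have hkg : ∀ᶠ u in 𝓝 0, 0 < k (g u) :=
    hg_tendsto.eventually (hk.continuousAt.eventually_const_lt hk0)
  have hgs : Tendsto g (𝓝[s] 0) (𝓝[s] 0) := by
    refine tendsto_nhdsWithin_iff.2 ⟨hg_tendsto.mono_left nhdsWithin_le_nhds, ?_⟩
    filter_upwards [nhdsWithin_le_nhds hright, nhdsWithin_le_nhds hkg, self_mem_nhdsWithin]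
      with u hu hpos hus
    exact hs_cone hpos (hu.symm ▸ hus)
  refine ⟨g, hg, hg'.deriv, ?_⟩
  filter_upwards [hgs.eventually hgraph, nhdsWithin_le_nhds hright] with u hgu hu
  rw [hu] at hgu
  linear_combination -hgu + g u * hu

lemma deriv_deriv_eq_of_graph (hk : ContDiffAt ℝ 2 k 0) (hk0 : 0 < k 0) (hs_open : IsOpen s)
    (hs_unique : UniqueDiffWithinAt ℝ s 0) (hs_cone : ∀ ⦃r t : ℝ⦄, 0 < r → t * r ∈ s → t ∈ s)
    (hgraph : ∀ᶠ t in 𝓝[s] 0, t ^ 2 * k t = h (t * k t))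
    (hh : DifferentiableAt ℝ (deriv h) 0) : deriv (deriv h) 0 = 2 / k 0 := by
  obtain ⟨g, hg, hg', hhg⟩ := exists_eventuallyEq_id_mul_of_graph hk hk0 hs_cone hgraph
  have hdiff : DifferentiableAt ℝ (deriv fun u ↦ u * g u) 0 :=
    ((contDiffAt_id.mul hg).derivWithin (m := 1) (by norm_num)).differentiableAt one_ne_zero
  rw [deriv_eq_of_eventuallyEq_nhdsWithin hs_unique (deriv_eventuallyEq_nhdsWithin hs_open hhg)
    hh hdiff, deriv_deriv_id_mul_zero hg, hg', div_eq_mul_inv]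

end Graph

/-- The factor `m(t, t²)` of `M` along the parabola, with the sign of `t` replaced by a constant
`e`. For fixed `e` it is smooth in `t`, also at `t = 0`. -/
noncomputable def parabolaFactor (e t : ℝ) : ℝ := 2 + e / √(1 + t ^ 2)

lemma parabolaFactor_zero (e : ℝ) : parabolaFactor e 0 = 2 + e := by simp [parabolaFactor]

lemma contDiff_parabolaFactor {n : WithTop ℕ∞} (e : ℝ) : ContDiff ℝ n (parabolaFactor e) := by
  have hpos (t : ℝ) : 0 < 1 + t ^ 2 := by positivity
  have hsqrt : ContDiff ℝ n fun t : ℝ ↦ √(1 + t ^ 2) :=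
    (contDiff_const.add (contDiff_id.pow 2)).sqrt fun t ↦ (hpos t).ne'
  exact contDiff_const.add (contDiff_const.div hsqrt fun t ↦ (Real.sqrt_pos.2 (hpos t)).ne')

lemma mfun_parabola (t : ℝ) : mfun (t, t ^ 2) = parabolaFactor (SignType.sign t) t := by
  rcases eq_or_ne t 0 with rfl | ht
  · simp [mfun, parabolaFactor]
  have hsqrt : √(t ^ 2 + (t ^ 2) ^ 2) = |t| * √(1 + t ^ 2) := by
    rw [← Real.sqrt_sq_eq_abs, ← Real.sqrt_mul (sq_nonneg t)]
    ring_nf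
  have hsign : t / |t| = SignType.sign t := by
    rw [div_eq_iff (abs_ne_zero.2 ht), sign_mul_abs]
  simp only [mfun, parabolaFactor, Prod.mk.injEq, ht, false_and, if_false]
  rw [hsqrt, ← div_div, hsign, add_comm]

lemma gam_eq (t : ℝ) : gam t = (t * parabolaFactor (SignType.sign t) t,
    t ^ 2 * parabolaFactor (SignType.sign t) t) := by
  simp only [gam, Mmap, mfun_parabola]

lemma deriv_deriv_eq_of_gam_mem_graph {e : ℝ} (he : 0 < 2 + e) {s : Set ℝ} (hs_open : IsOpen s)
    (hs_unique : UniqueDiffWithinAt ℝ s 0) (hs_cone : ∀ ⦃r t : ℝ⦄, 0 < r → t * r ∈ s → t ∈ s)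
    (hsign : ∀ t ∈ s, (SignType.sign t : ℝ) = e) {h : ℝ → ℝ}
    (hgraph : ∀ᶠ t in 𝓝 0, (gam t).2 = h (gam t).1) (hh : DifferentiableAt ℝ (deriv h) 0) :
    deriv (deriv h) 0 = 2 / (2 + e) := by
  rw [← parabolaFactor_zero] at he ⊢
  refine deriv_deriv_eq_of_graph (contDiff_parabolaFactor e).contDiffAt he hs_open hs_unique hs_cone
    ?_ hh
  filter_upwards [nhdsWithin_le_nhds hgraph, self_mem_nhdsWithin] with t ht hts
  simpa only [gam_eq, hsign t hts] using ht

/-- If the image of the parabola under `M` lies, near the origin, on the graph of a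
function `h : ℝ → ℝ`, then `h'` is not differentiable at `0`; in particular the image
is not locally the graph of a `C²` function. -/
theorem stmt9 (δ : ℝ) (hδ : 0 < δ) (h : ℝ → ℝ)
    (hgraph : ∀ t : ℝ, |t| < δ → (gam t).2 = h ((gam t).1)) :
    ¬ DifferentiableAt ℝ (deriv h) 0 := by
  intro hh
  have hgraph₀ : ∀ᶠ t in 𝓝 0, (gam t).2 = h (gam t).1 := by
    filter_upwards [Metric.ball_mem_nhds (0 : ℝ) hδ] with t ht
    exact hgraph t (by simpa using ht)
  have hright : deriv (deriv h) 0 = 2 / (2 + 1) :=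
    deriv_deriv_eq_of_gam_mem_graph (by norm_num) isOpen_Ioi (uniqueDiffWithinAt_Ioi 0)
      (fun _ _ hr ht ↦ pos_of_mul_pos_left ht hr.le)
      (fun t (ht : 0 < t) ↦ by simp [sign_pos ht]) hgraph₀ hh
  have hleft : deriv (deriv h) 0 = 2 / (2 + -1) :=
    deriv_deriv_eq_of_gam_mem_graph (by norm_num) isOpen_Iio (uniqueDiffWithinAt_Iio 0)
      (fun _ _ hr ht ↦ neg_of_mul_neg_left ht hr.le)
      (fun t (ht : t < 0) ↦ by simp [sign_neg ht]) hgraph₀ hh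
  norm_num [hright] at hleft
end
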